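/- arXiv:2106.05875 — 3 statements merged into one kernel-verified Lean document; each statement's English description precedes it below -/
import Mathlib

section
/- Let A ∈ ℝ^{n×n} be symmetric with 0 ⪯ A ⪯ I and let W_0, …, W_{N−1} ∈ ℝ^{P×P} be orthogonal matrices. For X, Y ∈ ℝ^{n×P}, define the IGT recursions U_0 = X, U_{m+1} = |(I − A)U_m W_m| and Ũ_0 = Y, Ũ_{m+1} = |(I − A)Ũ_m W_m|. Then for every N ∈ ℕ, Σ_{m=0}^N ‖A U_m − A Ũ_m‖² ≤ ‖X − Y‖², i.e. the order-N IGT is 1-Lipschitz; in particular (taking Y = 0), Σ_{m=0}^N ‖A U_m‖² ≤ ‖X‖². -/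
/-!
One layer splits energy: `‖A Z‖² + ‖(1 - A) Z‖² ≤ ‖Z‖²`, because
`1 - A² - (1 - A)² = 2 (A - A²)` and
`A - A² = A (1 - A) A + (1 - A) A (1 - A)` is positive semidefinite (`frobSq_split`).
Right multiplication by an orthogonal matrix preserves the Frobenius norm, and the entrywise
absolute value is 1-Lipschitz, so the difference `D_m` of the two recursions satisfies
`‖A D_m‖² + ‖D_{m+1}‖² ≤ ‖D_m‖²` (`igt_step`). Telescoping gives the Lipschitz bound; the second
claim is its case `Y = 0`, the recursion started at `0` being identically `0`.
-/

open Matrix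

/-- Squared Frobenius norm of a real matrix: `‖X‖² = Tr(XᵀX) = ∑ i j, X i j ^ 2`. -/
def frobSq {n P : ℕ} (X : Matrix (Fin n) (Fin P) ℝ) : ℝ := ∑ i, ∑ j, (X i j) ^ 2

/-- The IGT recursion: `U 0 = X`, `U (m+1) = |(I - A) * U m * W m|` (entrywise absolute
value). -/
def igtSeq {n P : ℕ} (A : Matrix (Fin n) (Fin n) ℝ)
    (W : ℕ → Matrix (Fin P) (Fin P) ℝ) (X : Matrix (Fin n) (Fin P) ℝ) :
    ℕ → Matrix (Fin n) (Fin P) ℝ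
  | 0 => X
  | m + 1 => ((1 - A) * igtSeq A W X m * W m).map (|·|)

lemma frobSq_eq_trace {n P : ℕ} (X : Matrix (Fin n) (Fin P) ℝ) :
    frobSq X = (Xᵀ * X).trace := by
  simp only [frobSq, Matrix.trace, Matrix.diag, Matrix.mul_apply, Matrix.transpose_apply, ← sq]
  exact Finset.sum_comm

lemma frobSq_nonneg {n P : ℕ} (X : Matrix (Fin n) (Fin P) ℝ) : 0 ≤ frobSq X :=
  Finset.sum_nonneg fun _ _ => Finset.sum_nonneg fun _ _ => sq_nonneg _

lemma frobSq_mul_orthogonal {n P : ℕ} (X : Matrix (Fin n) (Fin P) ℝ)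
    (W : Matrix (Fin P) (Fin P) ℝ) (hW : Wᵀ * W = 1) : frobSq (X * W) = frobSq X := by
  have hW' : W * Wᵀ = 1 := mul_eq_one_comm.mp hW
  rw [frobSq_eq_trace, frobSq_eq_trace, transpose_mul, Matrix.mul_assoc, Matrix.trace_mul_comm,
    Matrix.mul_assoc, Matrix.mul_assoc, hW', Matrix.mul_one]

lemma frobSq_abs_sub_abs_le {n P : ℕ} (X Y : Matrix (Fin n) (Fin P) ℝ) :
    frobSq (X.map (|·|) - Y.map (|·|)) ≤ frobSq (X - Y) := by
  refine Finset.sum_le_sum fun i _ => Finset.sum_le_sum fun j _ => ?_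
  simpa using sq_le_sq.mpr (abs_abs_sub_abs_le_abs_sub (X i j) (Y i j))

/-- `1 - a² - (1 - a)² = 2 (a - a²)`, with `a - a²` written as a sum of two congruences. -/
lemma one_eq_split {R : Type*} [Ring R] (a : R) :
    a * a + (1 - a) * (1 - a) + (a * (1 - a) * a + (1 - a) * a * (1 - a))
      + (a * (1 - a) * a + (1 - a) * a * (1 - a)) = 1 := by
  noncomm_ring

/-- The low-pass part `A Z` and the high-pass part `(1 - A) Z` together carry at most the energy
of `Z`. -/
lemma frobSq_split {n P : ℕ} (A : Matrix (Fin n) (Fin n) ℝ)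
    (hA_symm : A.IsSymm) (hA_psd : A.PosSemidef) (hIA_psd : (1 - A).PosSemidef)
    (Z : Matrix (Fin n) (Fin P) ℝ) :
    frobSq (A * Z) + frobSq ((1 - A) * Z) ≤ frobSq Z := by
  have hA : Aᵀ = A := hA_symm
  have hB : (1 - A)ᵀ = 1 - A := by rw [transpose_sub, hA, transpose_one]
  have h1 : (A * (1 - A) * A).PosSemidef := by
    have h := hIA_psd.conjTranspose_mul_mul_same A
    rwa [conjTranspose_eq_transpose_of_trivial, hA] at h
  have h2 : ((1 - A) * A * (1 - A)).PosSemidef := by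
    have h := hA_psd.conjTranspose_mul_mul_same (1 - A)
    rwa [conjTranspose_eq_transpose_of_trivial, hB] at h
  have h3 := ((h1.add h2).conjTranspose_mul_mul_same Z).trace_nonneg
  rw [conjTranspose_eq_transpose_of_trivial] at h3
  have hk := congrArg (fun M => (Zᵀ * M * Z).trace) (one_eq_split A)
  have e1 : frobSq (A * Z) = (Zᵀ * (A * A) * Z).trace := by
    rw [frobSq_eq_trace, transpose_mul, hA]
    simp only [Matrix.mul_assoc]
  have e2 : frobSq ((1 - A) * Z) = (Zᵀ * ((1 - A) * (1 - A)) * Z).trace := by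
    rw [frobSq_eq_trace, transpose_mul, hB]
    simp only [Matrix.mul_assoc]
  rw [e1, e2, frobSq_eq_trace]
  generalize A * (1 - A) * A + (1 - A) * A * (1 - A) = M at hk h3
  simp only [Matrix.mul_add, Matrix.add_mul _ _ Z, Matrix.mul_one,
    trace_add] at hk
  linarith

/-- Energy balance of one layer for the difference of two recursions. -/
lemma igt_step {n P : ℕ} (A : Matrix (Fin n) (Fin n) ℝ)
    (hA_symm : A.IsSymm) (hA_psd : A.PosSemidef) (hIA_psd : (1 - A).PosSemidef)
    (W : ℕ → Matrix (Fin P) (Fin P) ℝ) (X Y : Matrix (Fin n) (Fin P) ℝ)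
    (m : ℕ) (hW : (W m)ᵀ * W m = 1) :
    frobSq (A * igtSeq A W X m - A * igtSeq A W Y m)
      + frobSq (igtSeq A W X (m + 1) - igtSeq A W Y (m + 1))
      ≤ frobSq (igtSeq A W X m - igtSeq A W Y m) := by
  have h1 := frobSq_split A hA_symm hA_psd hIA_psd (igtSeq A W X m - igtSeq A W Y m)
  have h2 := frobSq_abs_sub_abs_le ((1 - A) * igtSeq A W X m * W m)
    ((1 - A) * igtSeq A W Y m * W m)
  rw [← Matrix.sub_mul, ← Matrix.mul_sub, frobSq_mul_orthogonal _ _ hW] at h2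
  rw [← Matrix.mul_sub]
  simp only [igtSeq]
  linarith

lemma igtSeq_zero {n P : ℕ} (A : Matrix (Fin n) (Fin n) ℝ)
    (W : ℕ → Matrix (Fin P) (Fin P) ℝ) (m : ℕ) : igtSeq A W 0 m = 0 := by
  induction m with
  | zero => rfl
  | succ m ih => ext i j; simp [igtSeq, ih]

lemma igt_lipschitz_aux {n P : ℕ} (A : Matrix (Fin n) (Fin n) ℝ)
    (hA_symm : A.IsSymm) (hA_psd : A.PosSemidef) (hIA_psd : (1 - A).PosSemidef)
    (N : ℕ) (W : ℕ → Matrix (Fin P) (Fin P) ℝ)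
    (hW : ∀ m < N, (W m)ᵀ * W m = 1)
    (X Y : Matrix (Fin n) (Fin P) ℝ) :
    ∑ m ∈ Finset.range (N + 1),
        frobSq (A * igtSeq A W X m - A * igtSeq A W Y m) ≤ frobSq (X - Y) := by
  have tel : ∀ k ≤ N, ∑ m ∈ Finset.range k, frobSq (A * igtSeq A W X m - A * igtSeq A W Y m)
      + frobSq (igtSeq A W X k - igtSeq A W Y k) ≤ frobSq (X - Y) := by
    intro k
    induction k with
    | zero => intro _; simp [igtSeq]
    | succ k ih =>
      intro hk
      have h1 := ih (by omega)
      have h2 := igt_step A hA_symm hA_psd hIA_psd W X Y k (hW k (by omega))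
      rw [Finset.sum_range_succ]
      linarith
  -- The last layer only needs `‖A D‖² ≤ ‖D‖²`, so `W N` plays no role.
  have h1 := tel N le_rfl
  have h2 := frobSq_split A hA_symm hA_psd hIA_psd (igtSeq A W X N - igtSeq A W Y N)
  have h3 := frobSq_nonneg ((1 - A) * (igtSeq A W X N - igtSeq A W Y N))
  rw [Finset.sum_range_succ, ← Matrix.mul_sub A (igtSeq A W X N)]
  linarith

/-- Let `A` be symmetric with `0 ⪯ A ⪯ I` and `W_0, …, W_{N-1}` orthogonal.
With the IGT recursions `U` (started at `X`) and `Ũ` (started at `Y`), for every `N`,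
`Σ_{m=0}^N ‖A U_m − A Ũ_m‖² ≤ ‖X − Y‖²` (the order-`N` IGT is 1-Lipschitz); in particular,
taking `Y = 0`, `Σ_{m=0}^N ‖A U_m‖² ≤ ‖X‖²`. -/
theorem igt_lipschitz {n P : ℕ} (A : Matrix (Fin n) (Fin n) ℝ)
    (hA_symm : A.IsSymm) (hA_psd : A.PosSemidef) (hIA_psd : (1 - A).PosSemidef)
    (N : ℕ) (W : ℕ → Matrix (Fin P) (Fin P) ℝ)
    (hW : ∀ m < N, (W m)ᵀ * W m = 1)
    (X Y : Matrix (Fin n) (Fin P) ℝ) :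
    (∑ m ∈ Finset.range (N + 1),
        frobSq (A * igtSeq A W X m - A * igtSeq A W Y m) ≤ frobSq (X - Y)) ∧
    (∑ m ∈ Finset.range (N + 1),
        frobSq (A * igtSeq A W X m) ≤ frobSq X) := by
  refine ⟨igt_lipschitz_aux A hA_symm hA_psd hIA_psd N W hW X Y, ?_⟩
  simpa [igtSeq_zero] using igt_lipschitz_aux A hA_symm hA_psd hIA_psd N W hW X 0
end

section
/- Let X : Ω → ℝ^P be a random vector such that for every unit vector v ∈ ℝ^P and every t ≥ 0, P(⟨v, X⟩ ≥ t) ≤ exp(−t²/(2σ²)). Then for every unit vector u ∈ ℝ^P and every t ≥ 0, P(Σ_{i=1}^P u_i |X_i| ≥ t) ≤ 2^P · exp(−t²/(2σ²)). -/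
/-!
Pointwise, `|X_i|` equals `±X_i`, so the event `t ≤ ∑ u_i |X_i|` is covered by the `2 ^ P` events
`t ≤ ∑ (ε_i u_i) X_i`, one for each sign pattern `ε`. Every `(ε_i u_i)` is again a unit vector, so
the hypothesis bounds each event, and a union bound finishes the proof.
-/

open MeasureTheory

/-- Let `X : Ω → ℝ^P` be a random vector such that for every unit vector `v`
and every `t ≥ 0`, `P(⟨v, X⟩ ≥ t) ≤ exp(−t²/(2σ²))`. Then for every unit vector `u` and
every `t ≥ 0`, `P(Σ_i u_i |X_i| ≥ t) ≤ 2^P · exp(−t²/(2σ²))`. -/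
theorem subGaussian_abs_tail_bound {Ω : Type*} [MeasurableSpace Ω] (μ : Measure Ω)
    [IsProbabilityMeasure μ] {P : ℕ} (σ : ℝ) (X : Ω → Fin P → ℝ)
    (hX : ∀ v : Fin P → ℝ, (∑ i, v i ^ 2) = 1 → ∀ t : ℝ, 0 ≤ t →
      (μ {ω | t ≤ ∑ i, v i * X ω i}).toReal ≤ Real.exp (-(t ^ 2) / (2 * σ ^ 2))) :
    ∀ u : Fin P → ℝ, (∑ i, u i ^ 2) = 1 → ∀ t : ℝ, 0 ≤ t →
      (μ {ω | t ≤ ∑ i, u i * |X ω i|}).toReal ≤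
        2 ^ P * Real.exp (-(t ^ 2) / (2 * σ ^ 2)) := by
  intro u hu t ht
  -- The sign pattern `ε` acts on `u` by flipping the coordinates where `ε` is `false`.
  let v : (Fin P → Bool) → Fin P → ℝ := fun ε i => if ε i then u i else -u i
  have hv : ∀ ε, ∑ i, v ε i ^ 2 = 1 := by
    intro ε
    rw [← hu]
    refine Finset.sum_congr rfl fun i _ => ?_
    by_cases h : ε i <;> simp [v, h]
  have hsub : {ω | t ≤ ∑ i, u i * |X ω i|} ⊆
      ⋃ ε : Fin P → Bool, {ω | t ≤ ∑ i, v ε i * X ω i} := by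
    intro ω hω
    refine Set.mem_iUnion.2 ⟨fun i => decide (0 ≤ X ω i), ?_⟩
    refine le_of_le_of_eq (Set.mem_setOf.1 hω) (Finset.sum_congr rfl fun i _ => ?_)
    by_cases h : 0 ≤ X ω i
    · simp [v, h, abs_of_nonneg h]
    · simp [v, h, abs_of_neg (not_le.1 h)]
  calc μ.real {ω | t ≤ ∑ i, u i * |X ω i|}
      ≤ μ.real (⋃ ε : Fin P → Bool, {ω | t ≤ ∑ i, v ε i * X ω i}) := measureReal_mono hsub
    _ ≤ ∑ ε : Fin P → Bool, μ.real {ω | t ≤ ∑ i, v ε i * X ω i} :=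
        measureReal_iUnion_fintype_le _
    _ ≤ ∑ _ε : Fin P → Bool, Real.exp (-(t ^ 2) / (2 * σ ^ 2)) :=
        Finset.sum_le_sum fun ε _ => hX (v ε) (hv ε) t ht
    _ = 2 ^ P * Real.exp (-(t ^ 2) / (2 * σ ^ 2)) := by simp
end

section
/- Let A ∈ ℝ^{n×n} be a matrix with nonnegative entries and let B ∈ ℝ^{n×P}. Then the supremum of ‖A |BW| ‖ over all matrices W ∈ ℝ^{P×P} with operator norm at most 1 is attained, and it equals the maximum of ‖A |BW| ‖ over all orthogonal matrices W ∈ ℝ^{P×P}. -/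
/-!
The objective `W ↦ ‖A |BW|‖²` is continuous and, since `A` is entrywise nonnegative, midpoint
convex (`objective_midpoint`), and the contractions form a compact set (`isCompact_contractions`).
Among the contractions maximizing the objective, take one, `W`, of largest Frobenius norm.

If `W` were not orthogonal, there would be `N ≠ 0` such that `W + N` and `W - N` are both
contractions (`exists_perturbation`): take an eigenvector `v` of `WᵀW` with eigenvalue `< 1` and
perturb by a small multiple of a rank-one matrix `u vᵀ` with `Wᵀu` proportional to `v`. By midpoint
convexity `W + N` and `W - N` both maximize the objective as well, while
`‖W + N‖² + ‖W - N‖² = 2‖W‖² + 2‖N‖²` forces one of them to have a larger Frobenius norm than `W`,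
a contradiction.
-/

open Matrix

/-- Frobenius norm of a real matrix. -/
noncomputable def frob {n P : ℕ} (X : Matrix (Fin n) (Fin P) ℝ) : ℝ := Real.sqrt (frobSq X)

/-- `W` has (Euclidean) operator norm at most `1`: `‖Wx‖ ≤ ‖x‖` for every `x`. -/
def OpNormLeOne {P : ℕ} (W : Matrix (Fin P) (Fin P) ℝ) : Prop :=
  ∀ x : Fin P → ℝ, ∑ j, (W.mulVec x j) ^ 2 ≤ ∑ j, (x j) ^ 2

lemma sum_sq_eq_dotProduct {P : ℕ} (x : Fin P → ℝ) : ∑ j, (x j) ^ 2 = x ⬝ᵥ x := by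
  simp [dotProduct, sq]

lemma opNormLeOne_iff {P : ℕ} (W : Matrix (Fin P) (Fin P) ℝ) :
    OpNormLeOne W ↔ ∀ x, (W *ᵥ x) ⬝ᵥ (W *ᵥ x) ≤ x ⬝ᵥ x := by
  simp only [OpNormLeOne, sum_sq_eq_dotProduct]

lemma objective_midpoint {n P : ℕ}
    (A : Matrix (Fin n) (Fin n) ℝ) (hA : ∀ i j, 0 ≤ A i j)
    (B : Matrix (Fin n) (Fin P) ℝ) (W N : Matrix (Fin P) (Fin P) ℝ) :
    2 * frobSq (A * (B * W).map (|·|)) ≤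
      frobSq (A * (B * (W + N)).map (|·|)) + frobSq (A * (B * (W - N)).map (|·|)) := by
  simp only [frobSq, Finset.mul_sum, ← Finset.sum_add_distrib]
  refine Finset.sum_le_sum fun i _ => Finset.sum_le_sum fun j _ => ?_
  have h0 : 0 ≤ (A * (B * W).map (|·|)) i j := by
    rw [Matrix.mul_apply]
    exact Finset.sum_nonneg fun k _ => mul_nonneg (hA i k) (abs_nonneg _)
  have h1 : 2 * (A * (B * W).map (|·|)) i j ≤
      (A * (B * (W + N)).map (|·|)) i j + (A * (B * (W - N)).map (|·|)) i j := by
    have e (M : Matrix (Fin n) (Fin P) ℝ) : (A * M) i j = ∑ k, A i k * M k j := Matrix.mul_apply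
    simp only [e, Finset.mul_sum, ← Finset.sum_add_distrib, Matrix.map_apply]
    refine Finset.sum_le_sum fun k _ => ?_
    rw [Matrix.mul_add, Matrix.mul_sub, Matrix.add_apply, Matrix.sub_apply]
    have h2 : 2 * |(B * W) k j| ≤
        |(B * W) k j + (B * N) k j| + |(B * W) k j - (B * N) k j| := by
      have := abs_add_le ((B * W) k j + (B * N) k j) ((B * W) k j - (B * N) k j)
      have e : (B * W) k j + (B * N) k j + ((B * W) k j - (B * N) k j) = 2 * (B * W) k j := by
        ring
      rwa [e, abs_mul, abs_two] at this
    nlinarith [mul_le_mul_of_nonneg_left h2 (hA i k)]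
  generalize (A * (B * W).map (|·|)) i j = a at *
  generalize (A * (B * (W + N)).map (|·|)) i j = b at *
  generalize (A * (B * (W - N)).map (|·|)) i j = c at *
  nlinarith [sq_nonneg (b - c), mul_self_le_mul_self (by linarith : 0 ≤ 2 * a) h1]

lemma continuous_frobSq {n P : ℕ} : Continuous (frobSq : Matrix (Fin n) (Fin P) ℝ → ℝ) := by
  unfold frobSq
  fun_prop

lemma continuous_objective {n P : ℕ}
    (A : Matrix (Fin n) (Fin n) ℝ) (B : Matrix (Fin n) (Fin P) ℝ) :
    Continuous fun W : Matrix (Fin P) (Fin P) ℝ => frobSq (A * (B * W).map (|·|)) := by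
  refine continuous_frobSq.comp (continuous_const.matrix_mul ?_)
  exact (continuous_const.matrix_mul continuous_id).matrix_map continuous_abs

lemma isCompact_contractions (P : ℕ) :
    IsCompact {W : Matrix (Fin P) (Fin P) ℝ | OpNormLeOne W} := by
  have hc : IsCompact (Set.univ.pi fun _ : Fin P => Set.univ.pi fun _ : Fin P =>
      Set.Icc (-1 : ℝ) 1) :=
    isCompact_univ_pi fun _ => isCompact_univ_pi fun _ => isCompact_Icc
  refine IsCompact.of_isClosed_subset hc ?_ ?_
  · simp only [OpNormLeOne, Set.ofPred_forall]
    refine isClosed_iInter fun x => isClosed_le ?_ continuous_const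
    refine continuous_finsetSum _ fun j _ => Continuous.pow ?_ 2
    exact (continuous_apply j).comp (continuous_id.matrix_mulVec continuous_const)
  · intro W hW i _ j _
    have h := hW (Pi.single j 1)
    have h1 : ∑ k, ((Pi.single j 1 : Fin P → ℝ) k) ^ 2 = 1 := by
      simp [sum_sq_eq_dotProduct]
    rw [h1] at h
    have h2 := (Finset.single_le_sum (f := fun k => (W *ᵥ Pi.single j 1) k ^ 2)
      (fun k _ => sq_nonneg _) (Finset.mem_univ i)).trans h
    simp only [Matrix.mulVec_single_one, Matrix.col_apply] at h2
    exact abs_le.mp (by simpa using (sq_le_one_iff_abs_le_one _).mp h2)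

/-- A right singular vector of singular value `< 1`, whenever the contraction `W` is not
orthogonal. -/
lemma exists_eigenvector {P : ℕ} (W : Matrix (Fin P) (Fin P) ℝ) (hW : OpNormLeOne W)
    (hne : Wᵀ * W ≠ 1) :
    ∃ (v : Fin P → ℝ) (μ : ℝ), v ⬝ᵥ v = 1 ∧ μ < 1 ∧ Wᵀ *ᵥ (W *ᵥ v) = μ • v := by
  have hG : (1 - Wᵀ * W).IsHermitian := by
    simp [Matrix.IsHermitian, Matrix.transpose_mul]
  have h0 : hG.eigenvalues ≠ 0 := fun h =>
    hne (sub_eq_zero.mp (hG.eigenvalues_eq_zero_iff.mp h)).symm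
  obtain ⟨i, hi⟩ := Function.ne_iff.mp h0
  set v : Fin P → ℝ := (hG.eigenvectorBasis i).ofLp with hv
  have hvv : v ⬝ᵥ v = 1 := by
    have h := hG.eigenvectorBasis.orthonormal.1 i
    have h' : ‖hG.eigenvectorBasis i‖ ^ 2 = 1 := by rw [h]; norm_num
    rw [EuclideanSpace.real_norm_sq_eq] at h'
    rw [← sum_sq_eq_dotProduct]
    exact h'
  have he := hG.mulVec_eigenvectorBasis i
  rw [← hv, Matrix.sub_mulVec, Matrix.one_mulVec, ← Matrix.mulVec_mulVec] at he
  have he' : Wᵀ *ᵥ (W *ᵥ v) = (1 - hG.eigenvalues i) • v := by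
    rw [sub_smul, one_smul, ← he]; abel
  refine ⟨v, 1 - hG.eigenvalues i, hvv, ?_, he'⟩
  have h1 := (opNormLeOne_iff W).mp hW v
  have h2 : (W *ᵥ v) ⬝ᵥ (W *ᵥ v) = 1 - hG.eigenvalues i := by
    rw [Matrix.dotProduct_mulVec, ← Matrix.mulVec_transpose, he', smul_dotProduct, hvv]
    simp
  rw [h2, hvv] at h1
  exact lt_of_le_of_ne h1 fun h => hi (by simpa using h)

/-- The contraction inequality improves in the direction of a singular vector, because `W` maps
`v` and its orthogonal complement to orthogonal subspaces. -/
lemma contraction_gap {P : ℕ} (W : Matrix (Fin P) (Fin P) ℝ) (hW : OpNormLeOne W)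
    (v : Fin P → ℝ) (μ : ℝ) (hv : v ⬝ᵥ v = 1) (he : Wᵀ *ᵥ (W *ᵥ v) = μ • v) (x : Fin P → ℝ) :
    (W *ᵥ x) ⬝ᵥ (W *ᵥ x) ≤ x ⬝ᵥ x - (1 - μ) * (v ⬝ᵥ x) ^ 2 := by
  have hc : ∀ y, (W *ᵥ v) ⬝ᵥ (W *ᵥ y) = μ * (v ⬝ᵥ y) := fun y => by
    rw [Matrix.dotProduct_mulVec, ← Matrix.mulVec_transpose, he, smul_dotProduct, smul_eq_mul]
  have h := (opNormLeOne_iff W).mp hW (x - (v ⬝ᵥ x) • v)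
  simp only [Matrix.mulVec_sub, Matrix.mulVec_smul, sub_dotProduct, dotProduct_sub,
    smul_dotProduct, dotProduct_smul, smul_eq_mul, hc, hv, dotProduct_comm (W *ᵥ x) (W *ᵥ v),
    dotProduct_comm x v] at h
  nlinarith [h]

/-- Contractions that are not orthogonal are not extreme in the unit ball. -/
lemma exists_perturbation {P : ℕ} (W : Matrix (Fin P) (Fin P) ℝ) (hW : OpNormLeOne W)
    (hne : Wᵀ * W ≠ 1) :
    ∃ N : Matrix (Fin P) (Fin P) ℝ, N ≠ 0 ∧ OpNormLeOne (W + N) ∧ OpNormLeOne (W - N) := by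
  obtain ⟨v, μ, hv, hμ, he⟩ := exists_eigenvector W hW hne
  have hv0 : v ≠ 0 := by rintro rfl; simp at hv
  -- For `W v = 0`, the square matrix `W` is singular, so `Wᵀ` has a kernel vector.
  obtain ⟨u, α, hu, huα⟩ : ∃ (u : Fin P → ℝ) (α : ℝ), u ≠ 0 ∧ Wᵀ *ᵥ u = α • v := by
    by_cases h : W *ᵥ v = 0
    · have hdet : W.det = 0 := Matrix.exists_mulVec_eq_zero_iff.mp ⟨v, hv0, h⟩
      obtain ⟨u, hu, hu0⟩ := Matrix.exists_mulVec_eq_zero_iff.mpr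
        ((Matrix.det_transpose W).trans hdet)
      exact ⟨u, 0, hu, by simpa using hu0⟩
    · exact ⟨W *ᵥ v, μ, h, he⟩
  have hβ : 0 ≤ u ⬝ᵥ u := by
    rw [← sum_sq_eq_dotProduct]; exact Finset.sum_nonneg fun _ _ => sq_nonneg _
  have key : ∀ s : ℝ, 2 * s * α + s ^ 2 * (u ⬝ᵥ u) ≤ 1 - μ →
      OpNormLeOne (W + s • vecMulVec u v) := by
    intro s hs
    rw [opNormLeOne_iff]
    intro x
    have hg := contraction_gap W hW v μ hv he x
    have h1 : u ⬝ᵥ (W *ᵥ x) = α * (v ⬝ᵥ x) := by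
      rw [Matrix.dotProduct_mulVec, ← Matrix.mulVec_transpose, huα, smul_dotProduct, smul_eq_mul]
    have h2 : (W + s • vecMulVec u v) *ᵥ x = W *ᵥ x + (s * (v ⬝ᵥ x)) • u := by
      rw [Matrix.add_mulVec, Matrix.smul_mulVec, Matrix.vecMulVec_mulVec]
      ext i
      simp
      ring
    rw [h2]
    simp only [add_dotProduct, dotProduct_add, smul_dotProduct, dotProduct_smul, smul_eq_mul,
      dotProduct_comm (W *ᵥ x) u, h1]
    nlinarith [mul_le_mul_of_nonneg_right hs (sq_nonneg (v ⬝ᵥ x))]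
  -- `t ≤ 1` makes `t² ≤ t`, so `t (2|α| + u ⬝ u) ≤ 1 - μ` suffices for both signs.
  obtain ⟨t, ht0, ht1, ht⟩ : ∃ t : ℝ, 0 < t ∧ t ≤ 1 ∧ t * (2 * |α| + u ⬝ᵥ u) ≤ 1 - μ := by
    have hd : 0 < 2 * |α| + u ⬝ᵥ u + 1 := by positivity
    have hq : 0 < (1 - μ) / (2 * |α| + u ⬝ᵥ u + 1) := div_pos (by linarith) hd
    refine ⟨min 1 ((1 - μ) / (2 * |α| + u ⬝ᵥ u + 1)), lt_min one_pos hq, min_le_left _ _, ?_⟩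
    calc _ ≤ (1 - μ) / (2 * |α| + u ⬝ᵥ u + 1) * (2 * |α| + u ⬝ᵥ u + 1) := by
          apply mul_le_mul (min_le_right _ _) (by linarith) (by positivity) hq.le
      _ = 1 - μ := by field_simp
  have hsq : t ^ 2 * (u ⬝ᵥ u) ≤ t * (u ⬝ᵥ u) :=
    mul_le_mul_of_nonneg_right (by nlinarith) hβ
  refine ⟨t • vecMulVec u v, ?_, key t ?_, ?_⟩
  · exact smul_ne_zero ht0.ne' (Matrix.vecMulVec_ne_zero hu hv0)
  · nlinarith [mul_le_mul_of_nonneg_left (le_abs_self α) ht0.le]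
  · rw [sub_eq_add_neg, ← neg_smul]
    refine key (-t) ?_
    nlinarith [mul_le_mul_of_nonneg_left (neg_le_abs α) ht0.le]

lemma frobSq_parallelogram {n P : ℕ} (W N : Matrix (Fin n) (Fin P) ℝ) :
    frobSq (W + N) + frobSq (W - N) = 2 * frobSq W + 2 * frobSq N := by
  simp only [frobSq, Finset.mul_sum, ← Finset.sum_add_distrib, Matrix.add_apply, Matrix.sub_apply]
  refine Finset.sum_congr rfl fun i _ => Finset.sum_congr rfl fun j _ => ?_
  ring

lemma frobSq_pos {n P : ℕ} {N : Matrix (Fin n) (Fin P) ℝ} (hN : N ≠ 0) : 0 < frobSq N := by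
  obtain ⟨i, j, hij⟩ : ∃ i j, N i j ≠ 0 := by
    by_contra! h
    exact hN (Matrix.ext h)
  have hn : ∀ i, 0 ≤ ∑ j, N i j ^ 2 := fun i => Finset.sum_nonneg fun _ _ => sq_nonneg _
  exact Finset.sum_pos' (fun i _ => hn i) ⟨i, Finset.mem_univ i,
    Finset.sum_pos' (fun _ _ => sq_nonneg _) ⟨j, Finset.mem_univ j, by positivity⟩⟩

/-- Let `A ∈ ℝ^{n×n}` have nonnegative entries and `B ∈ ℝ^{n×P}`. Then the
supremum of `‖A |BW|‖` (Frobenius norm, entrywise absolute value) over all `W ∈ ℝ^{P×P}`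
with operator norm at most `1` is attained, and it is attained at (hence equals the maximum
over) orthogonal matrices `W`. -/
theorem sup_over_ball_attained_at_orthogonal {n P : ℕ}
    (A : Matrix (Fin n) (Fin n) ℝ) (hA_nonneg : ∀ i j, 0 ≤ A i j)
    (B : Matrix (Fin n) (Fin P) ℝ) :
    ∃ W₀ : Matrix (Fin P) (Fin P) ℝ, W₀ᵀ * W₀ = 1 ∧
      IsGreatest
        {y : ℝ | ∃ W : Matrix (Fin P) (Fin P) ℝ,
          OpNormLeOne W ∧ y = frob (A * (B * W).map (|·|))}
        (frob (A * (B * W₀).map (|·|))) := by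
  set g : Matrix (Fin P) (Fin P) ℝ → ℝ := fun W => frobSq (A * (B * W).map (|·|)) with hg
  have hgc : Continuous g := continuous_objective A B
  have hK := isCompact_contractions P
  obtain ⟨W₁, hW₁, hmax₁⟩ := hK.exists_isMaxOn
    ⟨0, fun x => by simpa using Finset.sum_nonneg fun j _ => sq_nonneg (x j)⟩ hgc.continuousOn
  have hK' : IsCompact ({W | OpNormLeOne W} ∩ {W | g W₁ ≤ g W}) :=
    hK.inter_right (isClosed_le continuous_const hgc)
  obtain ⟨W₀, ⟨hW₀, hgW₀⟩, hmax₀⟩ := hK'.exists_isMaxOn ⟨W₁, hW₁, le_refl (g W₁)⟩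
    continuous_frobSq.continuousOn
  rw [isMaxOn_iff] at hmax₁ hmax₀
  simp only [Set.mem_ofPred_eq, Set.mem_inter_iff] at hW₀ hgW₀ hmax₁ hmax₀
  refine ⟨W₀, ?_, ⟨W₀, hW₀, rfl⟩, ?_⟩
  · by_contra hne
    obtain ⟨N, hN, hp, hm⟩ := exists_perturbation W₀ hW₀ hne
    have hmid : 2 * g W₀ ≤ g (W₀ + N) + g (W₀ - N) := objective_midpoint A hA_nonneg B W₀ N
    have h1 := hmax₁ _ hp
    have h2 := hmax₁ _ hm
    have h3 := hmax₀ _ ⟨hp, by linarith⟩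
    have h4 := hmax₀ _ ⟨hm, by linarith⟩
    linarith [frobSq_parallelogram W₀ N, frobSq_pos hN]
  · rintro y ⟨W, hW, rfl⟩
    exact Real.sqrt_le_sqrt ((hmax₁ W hW).trans hgW₀)
end
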